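/- Let d ≥ 1 and let h, h' : ℝ^d → ℝ be measurable with values in [0,1]. Let β_0, β_1, γ_0, γ_1 : {1,…,d} → ℝ with β_{1,i} > 0 and γ_{1,i} > 0 for every i (sign normalization). For z_1 ∈ ℝ^d and z_2 ∈ (ℝ∖{0})^d define μ(z_1,z_2) = ∫_{ℝ^d} h(v) ∏_{i=1}^d φ(v_i/z_{2,i} − β_{0,i} − β_{1,i} z_{1,i}) / |z_{2,i}| dv, and μ'(z_1,z_2) analogously with (h', γ_0, γ_1). Suppose μ = μ' on a nonempty open set U ⊆ ℝ^d × (ℝ∖{0})^d, and for every i ∈ {1,…,d} there exist a point (z_1, z_2) ∈ U and a nonempty open interval I of values of the i-th coordinate z_{1,i} (with all other coordinates of (z_1,z_2) held fixed, staying in U) on which the map z_{1,i} ↦ μ(z_1,z_2) is neither affine nor exponential-affine. Then β_{0,i} = γ_{0,i} and β_{1,i} = γ_{1,i} for every i, and h = h' Lebesgue-almost everywhere on ℝ^d. -/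

import Mathlib

open MeasureTheory

/-- The standard normal density `φ(t) = (2π)^{-1/2} exp(-t²/2)`. -/
noncomputable def stdNormalPDF (t : ℝ) : ℝ :=
  (Real.sqrt (2 * Real.pi))⁻¹ * Real.exp (-t ^ 2 / 2)

/-- The choice probability of an excluded outcome generated by the structural
function `h` and Gaussian index coefficients `(β₀, β₁)`:
`μ(z₁,z₂) = ∫ h(v) ∏ i, φ(v i / z₂ i − β₀ i − β₁ i z₁ i) / |z₂ i| dv`. -/
noncomputable def choiceProb {d : ℕ} (h : (Fin d → ℝ) → ℝ) (β₀ β₁ : Fin d → ℝ)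
    (z₁ z₂ : Fin d → ℝ) : ℝ :=
  ∫ v : Fin d → ℝ,
    h v * ∏ i : Fin d, stdNormalPDF (v i / z₂ i - β₀ i - β₁ i * z₁ i) / |z₂ i|

/-!
Let only the `i`-th location `c` and scale `z` of the index vary. The choice probability is then a
Gaussian smoothing of a fixed function and so solves a heat equation: its `z`-derivative is
`(∂²_c + c ∂_c) / z` applied to it. Substituting `c = β₀ i + β₁ i * s`, two models generating the
same probabilities `m s` give, after subtracting their heat equations,
`(β₀ i / β₁ i - γ₀ i / γ₁ i) * m' s + (1 / β₁ i ^ 2 - 1 / γ₁ i ^ 2) * m'' s = 0`.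
All solutions of a nontrivial equation of this kind are affine or affine in an exponential, hence
both brackets vanish, and the sign of the slopes identifies the coefficients.

With the coefficients known, translating the location multiplies the Gaussian density by an
exponential, so equality of the choice probabilities says that the Laplace transform of `h - h'`
times a positive Gaussian vanishes near `0`. By analytic continuation so does its Fourier transform.
-/

open Filter Function Topology

section SecondOrderODE

variable {f : ℝ → ℝ} {s : Set ℝ}

/-- The functions excluded by the paper's Assumption 4: those that coincide on `s` with an affine
function or with an affine function of an exponential. -/
def IsAffineOrExpAffineOn (f : ℝ → ℝ) (s : Set ℝ) : Prop :=
  (∃ a b : ℝ, ∀ x ∈ s, f x = a * x + b) ∨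
    ∃ a k b : ℝ, ∀ x ∈ s, f x = a * Real.exp (k * x) + b

lemma nonempty_of_not_isAffineOrExpAffineOn (hns : ¬ IsAffineOrExpAffineOn f s) : s.Nonempty := by
  by_contra! hempty
  exact hns (.inl ⟨0, 0, by simp [hempty]⟩)

lemma hasDerivAt_exp_mul (k x : ℝ) :
    HasDerivAt (fun x => Real.exp (k * x)) (k * Real.exp (k * x)) x := by
  simpa [mul_comm] using ((hasDerivAt_id x).const_mul k).exp

lemma exists_eqOn_mul_exp_of_deriv_eq_mul (hs : IsOpen s) (hs' : IsPreconnected s) {k : ℝ}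
    (hf : DifferentiableOn ℝ f s) (hf' : ∀ x ∈ s, deriv f x = k * f x) :
    ∃ a, ∀ x ∈ s, f x = a * Real.exp (k * x) := by
  have hg : ∀ x ∈ s, HasDerivAt (fun x => f x * Real.exp (-k * x)) 0 x := fun x hx => by
    have hfx := (hf.differentiableAt (hs.mem_nhds hx)).hasDerivAt
    refine (hfx.mul (hasDerivAt_exp_mul (-k) x)).congr_deriv ?_
    rw [hf' x hx]
    ring
  obtain ⟨a, ha⟩ := hs.exists_is_const_of_deriv_eq_zero hs'
    (fun x hx => (hg x hx).differentiableAt.differentiableWithinAt) fun x hx => (hg x hx).deriv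
  refine ⟨a, fun x hx => ?_⟩
  rw [← ha x hx, mul_assoc, ← Real.exp_add, neg_mul, neg_add_cancel, Real.exp_zero, mul_one]

lemma isAffineOrExpAffineOn_of_deriv_deriv_eq_mul (hs : IsOpen s) (hs' : IsPreconnected s) {k : ℝ}
    (hf : DifferentiableOn ℝ f s) (hf' : DifferentiableOn ℝ (deriv f) s)
    (hode : ∀ x ∈ s, deriv (deriv f) x = k * deriv f x) : IsAffineOrExpAffineOn f s := by
  obtain ⟨a, ha⟩ := exists_eqOn_mul_exp_of_deriv_eq_mul hs hs' hf' hode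
  rcases eq_or_ne k 0 with rfl | hk
  · have hlin : ∀ x, HasDerivAt (fun x => a * x) a x := fun x => by
      simpa using (hasDerivAt_id x).const_mul a
    obtain ⟨b, hb⟩ := hs.exists_eq_add_of_deriv_eq hs' hf
      (fun x _ => (hlin x).differentiableAt.differentiableWithinAt)
      fun x hx => by simp [ha x hx, (hlin x).deriv]
    exact .inl ⟨a, b, hb⟩
  · have hexp : ∀ x, HasDerivAt (fun x => a / k * Real.exp (k * x)) (a * Real.exp (k * x)) x :=
      fun x => ((hasDerivAt_exp_mul k x).const_mul (a / k)).congr_deriv (by field_simp)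
    obtain ⟨b, hb⟩ := hs.exists_eq_add_of_deriv_eq hs' hf
      (fun x _ => (hexp x).differentiableAt.differentiableWithinAt)
      fun x hx => by rw [ha x hx, (hexp x).deriv]
    exact .inr ⟨a / k, k, b, hb⟩

lemma coeffs_eq_zero_of_not_isAffineOrExpAffineOn (hs : IsOpen s) (hs' : IsPreconnected s)
    {a b : ℝ} (hf : DifferentiableOn ℝ f s) (hf' : DifferentiableOn ℝ (deriv f) s)
    (hode : ∀ x ∈ s, a * deriv f x + b * deriv (deriv f) x = 0)
    (hns : ¬ IsAffineOrExpAffineOn f s) : a = 0 ∧ b = 0 := by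
  have hb : b = 0 := by
    by_contra hb
    refine hns (isAffineOrExpAffineOn_of_deriv_deriv_eq_mul hs hs' (k := -a / b) hf hf' ?_)
    intro x hx
    field_simp
    linear_combination hode x hx
  refine ⟨?_, hb⟩
  by_contra ha
  have hconst : ∀ x ∈ s, deriv f x = 0 := fun x hx => by simpa [hb, ha] using hode x hx
  obtain ⟨C, hC⟩ := hs.exists_is_const_of_deriv_eq_zero hs' hf hconst
  exact hns (.inl ⟨0, C, fun x hx => by rw [hC x hx, zero_mul, zero_add]⟩)

end SecondOrderODE

section LaplaceUniqueness

open ProbabilityTheory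

section WithDensity

variable {α : Type*} [MeasurableSpace α] {μ : Measure α} {f g : α → ℝ}

lemma integrable_withDensity_ofReal (hf : AEMeasurable f μ) (hg : ∀ x, 0 ≤ g x)
    (hfg : Integrable (fun x => f x * g x) μ) :
    Integrable g (μ.withDensity fun x => ENNReal.ofReal (f x)) := by
  rw [integrable_withDensity_iff_integrable_smul₀' hf.ennreal_ofReal
    (ae_of_all _ fun x => ENNReal.ofReal_lt_top)]
  simpa only [ENNReal.toReal_ofReal', smul_eq_mul, max_mul_of_nonneg _ _ (hg _), zero_mul]
    using hfg.pos_part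

lemma integral_withDensity_ofReal (hf : AEMeasurable f μ) (g : α → ℝ) :
    ∫ x, g x ∂(μ.withDensity fun x => ENNReal.ofReal (f x)) = ∫ x, max (f x) 0 * g x ∂μ := by
  rw [integral_withDensity_eq_integral_toReal_smul₀ hf.ennreal_ofReal
    (ae_of_all _ fun x => ENNReal.ofReal_lt_top)]
  simp only [ENNReal.toReal_ofReal', smul_eq_mul]

lemma integral_withDensity_ofReal_sub (hf : AEMeasurable f μ) (hg : ∀ x, 0 ≤ g x)
    (hfg : Integrable (fun x => f x * g x) μ) :
    ∫ x, g x ∂(μ.withDensity fun x => ENNReal.ofReal (f x)) -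
      ∫ x, g x ∂(μ.withDensity fun x => ENNReal.ofReal (-f x)) = ∫ x, f x * g x ∂μ := by
  have hpos : Integrable (fun x => max (f x) 0 * g x) μ := by
    simpa only [max_mul_of_nonneg _ _ (hg _), zero_mul] using hfg.pos_part
  have hneg : Integrable (fun x => max (-f x) 0 * g x) μ := by
    simpa only [max_mul_of_nonneg _ _ (hg _), zero_mul, neg_mul] using hfg.neg_part
  rw [integral_withDensity_ofReal hf, integral_withDensity_ofReal (f := fun x => -f x) hf.neg,
    ← integral_sub hpos hneg]
  simp only [← sub_mul, max_zero_sub_max_neg_zero_eq_self]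

end WithDensity

variable {E : Type*} [NormedAddCommGroup E] [NormedSpace ℝ E] [CompleteSpace E]
  [SecondCountableTopology E] [MeasurableSpace E] [BorelSpace E]

lemma measure_eq_of_integral_exp_eventuallyEq {ν ν' : Measure E} [IsFiniteMeasure ν]
    [IsFiniteMeasure ν'] (hν : ∀ L : StrongDual ℝ E, Integrable (fun v => Real.exp (L v)) ν)
    (hν' : ∀ L : StrongDual ℝ E, Integrable (fun v => Real.exp (L v)) ν')
    (h : ∀ᶠ L : StrongDual ℝ E in 𝓝 0, ∫ v, Real.exp (L v) ∂ν = ∫ v, Real.exp (L v) ∂ν') :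
    ν = ν' := by
  refine Measure.ext_of_charFunDual (funext fun L => ?_)
  have hset : ∀ {η : Measure E}, (∀ L : StrongDual ℝ E, Integrable (fun v => Real.exp (L v)) η) →
      interior (integrableExpSet L η) = Set.univ := fun hη => by
    rw [interior_eq_univ, Set.eq_univ_iff_forall]
    exact fun t => hη (t • L)
  have hnear : mgf L ν =ᶠ[𝓝 0] mgf L ν' :=
    (Continuous.tendsto' (f := fun t : ℝ => t • L) (by fun_prop) 0 0 (zero_smul ℝ L)).eventually h
  have hmgf : mgf L ν = mgf L ν' :=
    AnalyticOnNhd.eq_of_eventuallyEq (hset hν ▸ analyticOnNhd_mgf) (hset hν' ▸ analyticOnNhd_mgf)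
      hnear
  have hzero : ν = 0 ↔ ν' = 0 := by
    have := congrFun hmgf 0
    rw [mgf_zero', mgf_zero'] at this
    rw [← Measure.measure_univ_eq_zero, ← Measure.measure_univ_eq_zero,
      ← measureReal_eq_zero_iff, ← measureReal_eq_zero_iff, this]
  have hI : complexMGF L ν Complex.I = complexMGF L ν' Complex.I :=
    eqOn_complexMGF_of_mgf' hmgf hzero (by simp [hset hν])
  simpa only [charFunDual_apply, complexMGF, mul_comm] using hI

lemma ae_eq_zero_of_integral_mul_exp_eq_zero {μ : Measure E} {f : E → ℝ}
    (hf : ∀ L : StrongDual ℝ E, Integrable (fun v => f v * Real.exp (L v)) μ)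
    (h : ∀ᶠ L : StrongDual ℝ E in 𝓝 0, ∫ v, f v * Real.exp (L v) ∂μ = 0) : f =ᵐ[μ] 0 := by
  have hfi : Integrable f μ := by simpa using hf 0
  have hneg : ∀ L : StrongDual ℝ E, Integrable (fun v => -f v * Real.exp (L v)) μ := fun L => by
    simpa only [neg_mul] using (hf L).fun_neg
  have := isFiniteMeasure_withDensity_ofReal hfi.hasFiniteIntegral
  have := isFiniteMeasure_withDensity_ofReal hfi.neg.hasFiniteIntegral
  have hmeas : (μ.withDensity fun v => ENNReal.ofReal (f v)) =
      μ.withDensity fun v => ENNReal.ofReal (-f v) := by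
    refine measure_eq_of_integral_exp_eventuallyEq
      (fun L => integrable_withDensity_ofReal hfi.aemeasurable (fun v => (Real.exp_pos _).le)
        (hf L))
      (fun L => integrable_withDensity_ofReal hfi.neg.aemeasurable (fun v => (Real.exp_pos _).le)
        (hneg L)) ?_
    filter_upwards [h] with L hL
    rw [← sub_eq_zero, integral_withDensity_ofReal_sub hfi.aemeasurable
      (fun v => (Real.exp_pos _).le) (hf L), hL]
  have hae := (withDensity_eq_iff hfi.aemeasurable.ennreal_ofReal
    hfi.neg.aemeasurable.ennreal_ofReal hfi.lintegral_lt_top.ne).mp hmeas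
  filter_upwards [hae] with v hv
  have hmax : max (f v) 0 = max (-f v) 0 := by
    simpa only [ENNReal.toReal_ofReal', Pi.neg_apply] using congrArg ENNReal.toReal hv
  rw [Pi.zero_apply, ← max_zero_sub_max_neg_zero_eq_self (f v), hmax, sub_self]

end LaplaceUniqueness

section GaussianDomination

/-- Measurable functions dominated by a Gaussian `K exp (-a ‖x‖²)` with `a > 0`. -/
structure GaussianDecay {E : Type*} [NormedAddCommGroup E] [MeasurableSpace E] (ψ : E → ℝ) :
    Prop where
  measurable : Measurable ψ
  exists_bound : ∃ a > 0, ∃ K, ∀ x, |ψ x| ≤ K * Real.exp (-a * ‖x‖ ^ 2)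

/-- A family of functions dominated near the parameter `t₀` by a single Gaussian; this is the
domination needed to differentiate under an integral sign at `t₀`. -/
def LocallyGaussianDominated {T E : Type*} [TopologicalSpace T] [NormedAddCommGroup E]
    (F : T → E → ℝ) (t₀ : T) : Prop :=
  ∃ a > 0, ∃ K, ∀ᶠ t in 𝓝 t₀, ∀ x, |F t x| ≤ K * Real.exp (-a * ‖x‖ ^ 2)

/-- Weights `w` whose product with every centred Gaussian of `X` is integrable. -/
def GaussianIntegrable {Ω E : Type*} [MeasurableSpace Ω] [NormedAddCommGroup E] (w : Ω → ℝ)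
    (X : Ω → E) (μ : Measure Ω) : Prop :=
  ∀ a > 0, Integrable (fun ω => w ω * Real.exp (-a * ‖X ω‖ ^ 2)) μ

lemma GaussianIntegrable.sub {Ω E : Type*} [MeasurableSpace Ω] [NormedAddCommGroup E]
    {w w' : Ω → ℝ} {X : Ω → E} {μ : Measure Ω} (hw : GaussianIntegrable w X μ)
    (hw' : GaussianIntegrable w' X μ) :
    GaussianIntegrable (w - w') X μ := fun a ha => by
  simpa only [Pi.sub_apply, sub_mul] using (hw a ha).sub' (hw' a ha)

variable {Ω E : Type*} [MeasurableSpace Ω] [NormedAddCommGroup E] [MeasurableSpace E]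

lemma norm_mul_le_mul_norm_mul_exp {x K r : ℝ} (w : ℝ) (hx : |x| ≤ K * Real.exp r) :
    ‖w * x‖ ≤ K * ‖w * Real.exp r‖ := by
  calc ‖w * x‖ ≤ ‖w‖ * (K * Real.exp r) := by
        rw [norm_mul]
        gcongr
        exact hx
    _ = K * ‖w * Real.exp r‖ := by
        rw [norm_mul, Real.norm_of_nonneg (Real.exp_pos _).le]
        ring

lemma norm_sq_le_sum_norm_sq {ι : Type*} [Fintype ι] {E : ι → Type*}
    [∀ i, SeminormedAddGroup (E i)] (v : ∀ i, E i) : ‖v‖ ^ 2 ≤ ∑ i, ‖v i‖ ^ 2 := by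
  have hsum : 0 ≤ ∑ i, ‖v i‖ ^ 2 := Finset.sum_nonneg fun i _ => sq_nonneg _
  rw [← Real.le_sqrt (norm_nonneg v) hsum, pi_norm_le_iff_of_nonneg (Real.sqrt_nonneg _)]
  exact fun i => Real.le_sqrt_of_sq_le
    (Finset.single_le_sum (fun j _ => sq_nonneg ‖v j‖) (Finset.mem_univ i))

namespace GaussianDecay

variable {ψ χ : E → ℝ}

lemma add (hψ : GaussianDecay ψ) (hχ : GaussianDecay χ) : GaussianDecay fun x => ψ x + χ x := by
  obtain ⟨a, ha, K, hK⟩ := hψ.exists_bound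
  obtain ⟨b, hb, M, hM⟩ := hχ.exists_bound
  refine ⟨hψ.measurable.add hχ.measurable, min a b, lt_min ha hb, |K| + |M|, fun x => ?_⟩
  calc |ψ x + χ x| ≤ K * Real.exp (-a * ‖x‖ ^ 2) + M * Real.exp (-b * ‖x‖ ^ 2) :=
        (abs_add_le _ _).trans (add_le_add (hK x) (hM x))
    _ ≤ |K| * Real.exp (-min a b * ‖x‖ ^ 2) + |M| * Real.exp (-min a b * ‖x‖ ^ 2) := by
        gcongr
        · exact le_abs_self K
        · exact min_le_left a b
        · exact le_abs_self M
        · exact min_le_right a b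
    _ = (|K| + |M|) * Real.exp (-min a b * ‖x‖ ^ 2) := (add_mul _ _ _).symm

lemma const_mul (hψ : GaussianDecay ψ) (k : ℝ) : GaussianDecay fun x => k * ψ x := by
  obtain ⟨a, ha, K, hK⟩ := hψ.exists_bound
  refine ⟨hψ.measurable.const_mul k, a, ha, |k| * K, fun x => ?_⟩
  rw [abs_mul, mul_assoc]
  gcongr
  exact hK x

lemma neg (hψ : GaussianDecay ψ) : GaussianDecay fun x => -ψ x := by
  simpa only [neg_one_mul] using hψ.const_mul (-1)

lemma sub (hψ : GaussianDecay ψ) (hχ : GaussianDecay χ) : GaussianDecay fun x => ψ x - χ x := by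
  simpa only [sub_eq_add_neg] using hψ.add hχ.neg

lemma id_mul {ψ : ℝ → ℝ} (hψ : GaussianDecay ψ) : GaussianDecay fun x => x * ψ x := by
  obtain ⟨a, ha, K, hK⟩ := hψ.exists_bound
  refine ⟨measurable_id.mul hψ.measurable, a / 2, half_pos ha, K * (1 + 1 / a), fun x => ?_⟩
  have hx : |x| ≤ (1 + 1 / a) * Real.exp (a / 2 * x ^ 2) := by
    have hexp := Real.add_one_le_exp (a / 2 * x ^ 2)
    calc |x| ≤ (1 + 1 / a) * (a / 2 * x ^ 2 + 1) := by
          have hexpand : (1 + 1 / a) * (a / 2 * x ^ 2 + 1) =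
            1 + 1 / a + a / 2 * x ^ 2 + x ^ 2 / 2 := by field_simp; ring
          have : 0 < 1 / a := by positivity
          have : 0 ≤ a / 2 * x ^ 2 := by positivity
          nlinarith [sq_nonneg (|x| - 1), sq_abs x]
      _ ≤ (1 + 1 / a) * Real.exp (a / 2 * x ^ 2) := by gcongr
  calc |x * ψ x| = |x| * |ψ x| := abs_mul _ _
    _ ≤ (1 + 1 / a) * Real.exp (a / 2 * x ^ 2) * (K * Real.exp (-a * ‖x‖ ^ 2)) := by
        gcongr
        exact hK x
    _ = K * (1 + 1 / a) * (Real.exp (a / 2 * x ^ 2) * Real.exp (-a * ‖x‖ ^ 2)) := by ring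
    _ = K * (1 + 1 / a) * Real.exp (-(a / 2) * ‖x‖ ^ 2) := by
        rw [← Real.exp_add, Real.norm_eq_abs, sq_abs]
        ring_nf

lemma exp_neg_mul_sq {a : ℝ} (ha : 0 < a) : GaussianDecay fun x : ℝ => Real.exp (-a * x ^ 2) :=
  ⟨by fun_prop, a, ha, 1, fun x => by simp⟩

lemma pi_prod {ι : Type*} [Fintype ι] {ψ : ι → ℝ → ℝ} (hψ : ∀ i, GaussianDecay (ψ i)) :
    GaussianDecay fun v : ι → ℝ => ∏ i, ψ i (v i) := by
  choose a ha K hK using fun i => (hψ i).exists_bound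
  obtain ⟨⟨b, hb⟩, hba⟩ := Finite.exists_ge fun i => (⟨a i, ha i⟩ : Set.Ioi (0 : ℝ))
  replace hba : ∀ i, b ≤ a i := hba
  have hK0 : ∀ i, 0 ≤ K i := fun i => by simpa using (abs_nonneg _).trans (hK i 0)
  refine ⟨Finset.measurable_fun_prod _ fun i _ => (hψ i).measurable.comp (measurable_pi_apply i),
    b, hb, ∏ i, K i, fun v => ?_⟩
  calc |∏ i, ψ i (v i)| = ∏ i, |ψ i (v i)| := Finset.abs_prod _ _
    _ ≤ ∏ i, K i * Real.exp (-b * ‖v i‖ ^ 2) := by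
        gcongr with i
        refine (hK i (v i)).trans ?_
        gcongr
        · exact hK0 i
        · exact hba i
    _ = (∏ i, K i) * Real.exp (-b * ∑ i, ‖v i‖ ^ 2) := by
        rw [Finset.prod_mul_distrib, ← Real.exp_sum, Finset.mul_sum]
    _ ≤ (∏ i, K i) * Real.exp (-b * ‖v‖ ^ 2) := by
        have hprod : 0 ≤ ∏ i, K i := Finset.prod_nonneg fun i _ => hK0 i
        gcongr ?_ * Real.exp ?_
        nlinarith [norm_sq_le_sum_norm_sq v, hb.out]

end GaussianDecay

namespace LocallyGaussianDominated

variable {T E : Type*} [TopologicalSpace T] [NormedAddCommGroup E] {F : T → E → ℝ} {t₀ : T}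

lemma comp {S : Type*} [TopologicalSpace S] {g : S → T} {s₀ : S}
    (hF : LocallyGaussianDominated F (g s₀)) (hg : ContinuousAt g s₀) :
    LocallyGaussianDominated (fun s => F (g s)) s₀ := by
  obtain ⟨a, ha, K, hK⟩ := hF
  exact ⟨a, ha, K, hg.eventually hK⟩

lemma continuousAt_mul (hF : LocallyGaussianDominated F t₀) {k : T → ℝ} (hk : ContinuousAt k t₀) :
    LocallyGaussianDominated (fun t x => k t * F t x) t₀ := by
  obtain ⟨a, ha, K, hK⟩ := hF
  refine ⟨a, ha, (|k t₀| + 1) * K, ?_⟩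
  filter_upwards [hK, hk.abs.eventually_lt_const (lt_add_one _)] with t ht hkt x
  rw [abs_mul, mul_assoc]
  gcongr
  exact ht x

end LocallyGaussianDominated

namespace GaussianIntegrable

variable {w : Ω → ℝ} {X : Ω → E} {μ : Measure Ω}

lemma aestronglyMeasurable [OpensMeasurableSpace E] (hw : GaussianIntegrable w X μ)
    (hX : AEMeasurable X μ) : AEStronglyMeasurable w μ := by
  have hinv : AEMeasurable (fun ω => Real.exp (‖X ω‖ ^ 2)) μ :=
    (by fun_prop : Measurable fun x : E => Real.exp (‖x‖ ^ 2)).comp_aemeasurable hX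
  refine ((hw 1 one_pos).aestronglyMeasurable.mul hinv.aestronglyMeasurable).congr
    (ae_of_all _ fun ω => ?_)
  rw [Pi.mul_apply, mul_assoc, ← Real.exp_add, neg_one_mul, neg_add_cancel, Real.exp_zero, mul_one]

lemma integrable_mul_comp [OpensMeasurableSpace E] (hw : GaussianIntegrable w X μ)
    (hX : AEMeasurable X μ) {ψ : E → ℝ} (hψ : GaussianDecay ψ) :
    Integrable (fun ω => w ω * ψ (X ω)) μ := by
  obtain ⟨a, ha, K, hK⟩ := hψ.exists_bound
  refine ((hw a ha).norm.const_mul K).mono' ((hw.aestronglyMeasurable hX).mul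
    (hψ.measurable.comp_aemeasurable hX).aestronglyMeasurable) (ae_of_all _ fun ω =>
    norm_mul_le_mul_norm_mul_exp (w ω) (hK (X ω)))

lemma hasDerivAt_integral [OpensMeasurableSpace E] (hw : GaussianIntegrable w X μ)
    (hX : AEMeasurable X μ) {F F' : ℝ → E → ℝ} {t₀ : ℝ} (hF : ∀ᶠ t in 𝓝 t₀, GaussianDecay (F t))
    (hF' : Measurable (F' t₀)) (hdom : LocallyGaussianDominated F' t₀)
    (hderiv : ∀ᶠ t in 𝓝 t₀, ∀ x, HasDerivAt (F · x) (F' t x) t) :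
    HasDerivAt (fun t => ∫ ω, w ω * F t (X ω) ∂μ) (∫ ω, w ω * F' t₀ (X ω) ∂μ) t₀ := by
  obtain ⟨a, ha, K, hK⟩ := hdom
  refine (hasDerivAt_integral_of_dominated_loc_of_deriv_le (hK.and hderiv)
    (bound := fun ω => K * ‖w ω * Real.exp (-a * ‖X ω‖ ^ 2)‖)
    (hF.mono fun t ht => (hw.integrable_mul_comp hX ht).aestronglyMeasurable)
    (hw.integrable_mul_comp hX hF.self_of_nhds)
    ((hw.aestronglyMeasurable hX).mul (hF'.comp_aemeasurable hX).aestronglyMeasurable)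
    (ae_of_all _ fun ω t ht => norm_mul_le_mul_norm_mul_exp (w ω) (ht.1 (X ω)))
    ((hw a ha).norm.const_mul K)
    (ae_of_all _ fun ω t ht => (ht.2 (X ω)).const_mul (w ω))).2

end GaussianIntegrable

end GaussianDomination

section LocationScale

/-- The location–scale transform of a profile `ψ`, oriented as in `choiceProb`: when `ψ` is the
density of `e`, this is the density of `z * (c + e)`. At `z = 0` it is `0`, as `|0|⁻¹ = 0`. -/
noncomputable def locScale (ψ : ℝ → ℝ) (c z x : ℝ) : ℝ :=
  ψ (x / z - c) / |z|

variable {ψ χ : ℝ → ℝ} {c z x : ℝ}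

lemma hasDerivAt_locScale_location (hderiv : ∀ y, HasDerivAt ψ (-χ y) y) :
    HasDerivAt (fun c => locScale ψ c z x) (locScale χ c z x) c := by
  have hinner : HasDerivAt (fun c => x / z - c) (-1) c := (hasDerivAt_id c).const_sub (x / z)
  exact (((hderiv _).comp c hinner).div_const |z|).congr_deriv (by rw [locScale]; ring)

lemma hasDerivAt_locScale_scale (hderiv : ∀ y, HasDerivAt ψ (-χ y) y) (hz : z ≠ 0) :
    HasDerivAt (fun z => locScale ψ c z x)
      (z⁻¹ * locScale (fun y => (y + c) * χ y - ψ y) c z x) z := by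
  have hinner : HasDerivAt (fun z => x / z - c) (-x / z ^ 2) z := by
    simpa [div_eq_mul_inv] using ((hasDerivAt_inv hz).const_mul x).sub_const c
  have habs : HasDerivAt (fun z => |z|) (|z| / z) z := by
    refine (hasDerivAt_abs hz).congr_deriv ?_
    rw [eq_div_iff hz, sign_mul_self]
  have hz' : |z| ≠ 0 := abs_ne_zero.mpr hz
  refine (((hderiv _).comp z hinner).div habs hz').congr_deriv ?_
  simp only [locScale, Function.comp_apply]
  field_simp
  ring

namespace GaussianDecay

lemma locallyGaussianDominated_div_sub (hψ : GaussianDecay ψ) (c : ℝ) (hz : z ≠ 0) :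
    LocallyGaussianDominated (fun (p : ℝ × ℝ) (x : ℝ) => ψ (x / p.2 - p.1)) (c, z) := by
  obtain ⟨a, ha, K, hK⟩ := hψ.exists_bound
  have hK0 : 0 ≤ K := by simpa using (abs_nonneg _).trans (hK 0)
  refine ⟨a / (4 * z ^ 2), by positivity, K * Real.exp (a * (c ^ 2 + 1)), ?_⟩
  have hc : ∀ᶠ p : ℝ × ℝ in 𝓝 (c, z), p.1 ^ 2 < c ^ 2 + 1 :=
    (continuous_fst.fun_pow 2).tendsto (c, z) |>.eventually_lt_const (lt_add_one _)
  have hz₁ : ∀ᶠ p : ℝ × ℝ in 𝓝 (c, z), p.2 ^ 2 < 2 * z ^ 2 :=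
    (continuous_snd.fun_pow 2).tendsto (c, z) |>.eventually_lt_const
      (lt_mul_of_one_lt_left (sq_pos_of_ne_zero hz) one_lt_two)
  have hz₂ : ∀ᶠ p : ℝ × ℝ in 𝓝 (c, z), p.2 ≠ 0 :=
    (continuous_snd.tendsto (c, z)).eventually_ne hz
  filter_upwards [hc, hz₁, hz₂] with p hpc hpz hp x
  have hsq : x ^ 2 ≤ 4 * z ^ 2 * ((x / p.2 - p.1) ^ 2 + (c ^ 2 + 1)) := by
    calc x ^ 2 = p.2 ^ 2 * ((x / p.2 - p.1) + p.1) ^ 2 := by field_simp; ring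
      _ ≤ 2 * z ^ 2 * (2 * ((x / p.2 - p.1) ^ 2 + p.1 ^ 2)) := by
          gcongr
          exact add_sq_le
      _ ≤ 2 * z ^ 2 * (2 * ((x / p.2 - p.1) ^ 2 + (c ^ 2 + 1))) := by gcongr
      _ = 4 * z ^ 2 * ((x / p.2 - p.1) ^ 2 + (c ^ 2 + 1)) := by ring
  have hexponent : a / (4 * z ^ 2) * x ^ 2 ≤ a * ((x / p.2 - p.1) ^ 2 + (c ^ 2 + 1)) := by
    rw [div_mul_eq_mul_div, div_le_iff₀ (by positivity)]
    nlinarith [mul_le_mul_of_nonneg_left hsq ha.le]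
  refine (hK _).trans ?_
  rw [mul_assoc, ← Real.exp_add, Real.norm_eq_abs, Real.norm_eq_abs, sq_abs, sq_abs]
  gcongr
  linarith

lemma locallyGaussianDominated_locScale (hψ : GaussianDecay ψ) (c : ℝ) (hz : z ≠ 0) :
    LocallyGaussianDominated (fun p : ℝ × ℝ => locScale ψ p.1 p.2) (c, z) := by
  have hscale : ContinuousAt (fun p : ℝ × ℝ => |p.2|⁻¹) (c, z) :=
    continuous_snd.abs.continuousAt.inv₀ (abs_ne_zero.mpr hz)
  convert (hψ.locallyGaussianDominated_div_sub c hz).continuousAt_mul hscale using 3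
  exact div_eq_inv_mul _ _

lemma locScale (hψ : GaussianDecay ψ) (c : ℝ) (hz : z ≠ 0) : GaussianDecay (locScale ψ c z) := by
  obtain ⟨a, ha, K, hK⟩ := hψ.locallyGaussianDominated_locScale c hz
  exact ⟨(hψ.measurable.comp (by fun_prop)).div_const _, a, ha, K, hK.self_of_nhds⟩

end GaussianDecay

end LocationScale

section LocationScaleAverage

variable {Ω : Type*} [MeasurableSpace Ω] {μ : Measure Ω} {w X : Ω → ℝ} {ψ χ : ℝ → ℝ} {z : ℝ}

/-- The average of the location–scale transform of `ψ` along `X`, with weight `w`. -/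
noncomputable def locScaleAverage (μ : Measure Ω) (w X : Ω → ℝ) (ψ : ℝ → ℝ) (c z : ℝ) : ℝ :=
  ∫ ω, w ω * locScale ψ c z (X ω) ∂μ

lemma locScaleAverage_const_mul (k c : ℝ) :
    locScaleAverage μ w X (fun y => k * ψ y) c z = k * locScaleAverage μ w X ψ c z := by
  simp only [locScaleAverage, locScale, mul_div_assoc, mul_left_comm (w _), integral_const_mul]

namespace GaussianIntegrable

lemma locScaleAverage_add (hw : GaussianIntegrable w X μ) (hX : AEMeasurable X μ)
    (hψ : GaussianDecay ψ) (hχ : GaussianDecay χ) (c : ℝ) (hz : z ≠ 0) :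
    locScaleAverage μ w X (fun y => ψ y + χ y) c z =
      locScaleAverage μ w X ψ c z + locScaleAverage μ w X χ c z := by
  simp only [locScaleAverage]
  rw [← integral_add (hw.integrable_mul_comp hX (hψ.locScale c hz))
    (hw.integrable_mul_comp hX (hχ.locScale c hz))]
  simp only [locScale, add_div, mul_add]

lemma hasDerivAt_locScaleAverage_location (hw : GaussianIntegrable w X μ) (hX : AEMeasurable X μ)
    (hψ : GaussianDecay ψ) (hχ : GaussianDecay χ) (hderiv : ∀ y, HasDerivAt ψ (-χ y) y) (c : ℝ)
    (hz : z ≠ 0) :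
    HasDerivAt (fun c => locScaleAverage μ w X ψ c z) (locScaleAverage μ w X χ c z) c :=
  hw.hasDerivAt_integral hX (F := fun c => locScale ψ c z) (F' := fun c => locScale χ c z)
    (Eventually.of_forall fun c => hψ.locScale c hz)
    (hχ.locScale c hz).measurable
    ((hχ.locallyGaussianDominated_locScale c hz).comp (g := fun c => (c, z)) (by fun_prop))
    (Eventually.of_forall fun _ _ => hasDerivAt_locScale_location hderiv)

lemma hasDerivAt_locScaleAverage_scale (hw : GaussianIntegrable w X μ) (hX : AEMeasurable X μ)
    (hψ : GaussianDecay ψ) (hχ : GaussianDecay χ) (hderiv : ∀ y, HasDerivAt ψ (-χ y) y) (c : ℝ)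
    (hz : z ≠ 0) :
    HasDerivAt (fun z => locScaleAverage μ w X ψ c z)
      (z⁻¹ * locScaleAverage μ w X (fun y => (y + c) * χ y - ψ y) c z) z := by
  have hη : GaussianDecay fun y => (y + c) * χ y - ψ y := by
    simpa only [add_mul] using (hχ.id_mul.add (hχ.const_mul c)).sub hψ
  have hne : ∀ᶠ z' in 𝓝 z, z' ≠ 0 := eventually_ne_nhds hz
  refine (hw.hasDerivAt_integral hX (hne.mono fun z' hz' => hψ.locScale c hz')
    ((hη.locScale c hz).measurable.const_mul _)
    (((hη.locallyGaussianDominated_locScale c hz).comp (g := fun z' => (c, z'))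
      (by fun_prop)).continuousAt_mul (continuousAt_inv₀ hz))
    (hne.mono fun z' hz' x => hasDerivAt_locScale_scale hderiv hz')).congr_deriv ?_
  simp only [locScaleAverage, mul_left_comm (w _), integral_const_mul]

end GaussianIntegrable

end LocationScaleAverage

section StdNormal

lemma stdNormalPDF_pos (y : ℝ) : 0 < stdNormalPDF y := by
  unfold stdNormalPDF
  positivity

lemma hasDerivAt_stdNormalPDF (y : ℝ) : HasDerivAt stdNormalPDF (-(y * stdNormalPDF y)) y := by
  have hexponent : HasDerivAt (fun y : ℝ => -y ^ 2 / 2) (-y) y :=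
    ((hasDerivAt_pow 2 y).fun_neg.div_const 2).congr_deriv (by push_cast; ring)
  exact (hexponent.exp.const_mul _).congr_deriv (by rw [stdNormalPDF]; ring)

lemma hasDerivAt_mul_stdNormalPDF (y : ℝ) :
    HasDerivAt (fun y => y * stdNormalPDF y) (-(y * (y * stdNormalPDF y) - stdNormalPDF y)) y :=
  ((hasDerivAt_id y).mul (hasDerivAt_stdNormalPDF y)).congr_deriv (by simp only [id]; ring)

lemma gaussianDecay_stdNormalPDF : GaussianDecay stdNormalPDF := by
  convert (GaussianDecay.exp_neg_mul_sq one_half_pos).const_mul (Real.sqrt (2 * Real.pi))⁻¹ using 2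
  rw [stdNormalPDF]
  ring_nf

lemma stdNormalPDF_sub (y δ : ℝ) :
    stdNormalPDF (y - δ) = Real.exp (δ * y - δ ^ 2 / 2) * stdNormalPDF y := by
  rw [stdNormalPDF, stdNormalPDF, mul_left_comm, ← Real.exp_add]
  ring_nf

end StdNormal

section NormalAverage

variable {Ω : Type*} [MeasurableSpace Ω] {μ : Measure Ω} {w X : Ω → ℝ} {z : ℝ}

namespace GaussianIntegrable

lemma hasDerivAt_locScaleAverage_stdNormalPDF (hw : GaussianIntegrable w X μ)
    (hX : AEMeasurable X μ) (c : ℝ) (hz : z ≠ 0) :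
    HasDerivAt (fun c => locScaleAverage μ w X stdNormalPDF c z)
      (locScaleAverage μ w X (fun y => y * stdNormalPDF y) c z) c :=
  hw.hasDerivAt_locScaleAverage_location hX gaussianDecay_stdNormalPDF
    gaussianDecay_stdNormalPDF.id_mul hasDerivAt_stdNormalPDF c hz

lemma hasDerivAt_deriv_locScaleAverage_stdNormalPDF (hw : GaussianIntegrable w X μ)
    (hX : AEMeasurable X μ) (c : ℝ) (hz : z ≠ 0) :
    HasDerivAt (deriv fun c => locScaleAverage μ w X stdNormalPDF c z)
      (locScaleAverage μ w X (fun y => y * (y * stdNormalPDF y) - stdNormalPDF y) c z) c := by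
  rw [funext fun c => (hw.hasDerivAt_locScaleAverage_stdNormalPDF hX c hz).deriv]
  have hφ := gaussianDecay_stdNormalPDF
  exact hw.hasDerivAt_locScaleAverage_location hX hφ.id_mul (hφ.id_mul.id_mul.sub hφ)
    hasDerivAt_mul_stdNormalPDF c hz

lemma differentiable_locScaleAverage_stdNormalPDF (hw : GaussianIntegrable w X μ)
    (hX : AEMeasurable X μ) (hz : z ≠ 0) :
    Differentiable ℝ fun c => locScaleAverage μ w X stdNormalPDF c z := fun c =>
  (hw.hasDerivAt_locScaleAverage_stdNormalPDF hX c hz).differentiableAt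

lemma differentiable_deriv_locScaleAverage_stdNormalPDF (hw : GaussianIntegrable w X μ)
    (hX : AEMeasurable X μ) (hz : z ≠ 0) :
    Differentiable ℝ (deriv fun c => locScaleAverage μ w X stdNormalPDF c z) := fun c =>
  (hw.hasDerivAt_deriv_locScaleAverage_stdNormalPDF hX c hz).differentiableAt

-- The heat equation, in the parametrization by location `c` and scale `z`.
lemma hasDerivAt_locScaleAverage_stdNormalPDF_scale (hw : GaussianIntegrable w X μ)
    (hX : AEMeasurable X μ) (c : ℝ) (hz : z ≠ 0) :
    HasDerivAt (fun z => locScaleAverage μ w X stdNormalPDF c z)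
      (z⁻¹ * (deriv (deriv fun c => locScaleAverage μ w X stdNormalPDF c z) c +
        c * deriv (fun c => locScaleAverage μ w X stdNormalPDF c z) c)) z := by
  have hφ := gaussianDecay_stdNormalPDF
  refine (hw.hasDerivAt_locScaleAverage_scale hX hφ hφ.id_mul hasDerivAt_stdNormalPDF c
    hz).congr_deriv ?_
  rw [(hw.hasDerivAt_deriv_locScaleAverage_stdNormalPDF hX c hz).deriv,
    (hw.hasDerivAt_locScaleAverage_stdNormalPDF hX c hz).deriv, ← locScaleAverage_const_mul c,
    ← hw.locScaleAverage_add hX (hφ.id_mul.id_mul.sub hφ) (hφ.id_mul.const_mul c) c hz]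
  congr! 3 with y
  ring

end GaussianIntegrable

end NormalAverage

section IndexDensity

variable {ι : Type*} [Fintype ι]

/-- The density of the index vector `(z i * (c i + e i))ᵢ`, where the `e i` are independent standard
normal. -/
noncomputable def indexDensity (c z v : ι → ℝ) : ℝ :=
  ∏ i, locScale stdNormalPDF (c i) (z i) (v i)

variable {z : ι → ℝ}

lemma gaussianDecay_indexDensity (c : ι → ℝ) (hz : ∀ i, z i ≠ 0) :
    GaussianDecay (indexDensity c z) :=
  GaussianDecay.pi_prod fun i => gaussianDecay_stdNormalPDF.locScale (c i) (hz i)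

lemma indexDensity_pos (c v : ι → ℝ) (hz : ∀ i, z i ≠ 0) : 0 < indexDensity c z v :=
  Finset.prod_pos fun i _ => div_pos (stdNormalPDF_pos _) (abs_pos.mpr (hz i))

lemma locScale_stdNormalPDF_mul_exp {z : ℝ} (c l x : ℝ) (hz : z ≠ 0) :
    locScale stdNormalPDF c z x * Real.exp (l * x) =
      Real.exp (z * l * c + (z * l) ^ 2 / 2) * locScale stdNormalPDF (c + z * l) z x := by
  simp only [locScale]
  have hexponent : l * x =
      z * l * c + (z * l) ^ 2 / 2 + (z * l * (x / z - c) - (z * l) ^ 2 / 2) := by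
    field_simp
    ring
  rw [← sub_sub, stdNormalPDF_sub (x / z - c), hexponent, Real.exp_add]
  ring

lemma indexDensity_mul_exp (c l v : ι → ℝ) (hz : ∀ i, z i ≠ 0) :
    indexDensity c z v * Real.exp (∑ i, l i * v i) =
      Real.exp (∑ i, (z i * l i * c i + (z i * l i) ^ 2 / 2)) * indexDensity (c + z * l) z v := by
  simp only [indexDensity, Real.exp_sum, ← Finset.prod_mul_distrib]
  exact Finset.prod_congr rfl fun i _ => locScale_stdNormalPDF_mul_exp (c i) (l i) (v i) (hz i)

namespace GaussianIntegrable

variable {f : (ι → ℝ) → ℝ} {μ : Measure (ι → ℝ)}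

lemma ae_eq_zero_of_integral_mul_indexDensity_eq_zero (hf : GaussianIntegrable f id μ)
    {c₀ : ι → ℝ} (hz : ∀ i, z i ≠ 0)
    (hzero : ∀ᶠ c in 𝓝 c₀, ∫ v, f v * indexDensity c z v ∂μ = 0) : f =ᵐ[μ] 0 := by
  classical
  let dualCoeff : StrongDual ℝ (ι → ℝ) → ι → ℝ := fun L i => L (Pi.single i 1)
  have htilt : ∀ (L : StrongDual ℝ (ι → ℝ)), ∃ k, ∀ v,
      f v * indexDensity c₀ z v * Real.exp (L v) =
        k * (f v * indexDensity (c₀ + z * dualCoeff L) z v) := fun L => by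
    refine ⟨Real.exp (∑ i, (z i * dualCoeff L i * c₀ i + (z i * dualCoeff L i) ^ 2 / 2)),
      fun v => ?_⟩
    have hL : L v = ∑ i, dualCoeff L i * v i := by
      conv_lhs => rw [pi_eq_sum_univ' v, map_sum]
      simp [dualCoeff, mul_comm]
    rw [hL, mul_assoc, indexDensity_mul_exp c₀ _ v hz, mul_left_comm]
  have hae : (fun v => f v * indexDensity c₀ z v) =ᵐ[μ] 0 := by
    refine ae_eq_zero_of_integral_mul_exp_eq_zero (fun L => ?_) ?_
    · obtain ⟨k, hk⟩ := htilt L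
      simp only [hk]
      exact (hf.integrable_mul_comp aemeasurable_id (gaussianDecay_indexDensity _ hz)).const_mul k
    · have hcont : Continuous fun L => c₀ + z * dualCoeff L := by fun_prop
      filter_upwards [(hcont.tendsto' 0 c₀ (by ext; simp [dualCoeff])).eventually hzero] with L hL
      obtain ⟨k, hk⟩ := htilt L
      simp only [hk, integral_const_mul, hL, mul_zero]
  filter_upwards [hae] with v hv
  exact (mul_eq_zero.mp hv).resolve_right (indexDensity_pos c₀ v hz).ne'

lemma mul_prod_compl [DecidableEq ι] (hf : GaussianIntegrable f id μ) {ψ : ι → ℝ → ℝ} (i : ι)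
    (hψ : ∀ j ≠ i, GaussianDecay (ψ j)) :
    GaussianIntegrable (fun v => f v * ∏ j ∈ {i}ᶜ, ψ j (v j)) (fun v => v i) μ := by
  intro a ha
  have hdecay : ∀ j, GaussianDecay (update ψ i (fun x => Real.exp (-a * x ^ 2)) j) := by
    rw [forall_update_iff ψ fun _ => GaussianDecay]
    exact ⟨GaussianDecay.exp_neg_mul_sq ha, hψ⟩
  refine (hf.integrable_mul_comp aemeasurable_id (GaussianDecay.pi_prod hdecay)).congr
    (ae_of_all _ fun v => ?_)
  have hcompl : ∏ j ∈ {i}ᶜ, update ψ i (fun x => Real.exp (-a * x ^ 2)) j (v j) =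
      ∏ j ∈ {i}ᶜ, ψ j (v j) := Finset.prod_congr rfl fun j hj => by
    rw [update_of_ne (by simpa using hj)]
  simp only [id, Fintype.prod_eq_mul_prod_compl i, hcompl, update_self, Real.norm_eq_abs, sq_abs]
  ring

end GaussianIntegrable

end IndexDensity

section ChoiceProb

variable {d : ℕ} {h h' : (Fin d → ℝ) → ℝ} {β₀ β₁ γ₀ γ₁ z₁ z₂ : Fin d → ℝ}

lemma choiceProb_eq_integral_indexDensity (h : (Fin d → ℝ) → ℝ) (β₀ β₁ z₁ z₂ : Fin d → ℝ) :
    choiceProb h β₀ β₁ z₁ z₂ = ∫ v, h v * indexDensity (β₀ + β₁ * z₁) z₂ v := by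
  simp only [choiceProb, indexDensity, locScale, sub_sub, Pi.add_apply, Pi.mul_apply]

lemma deriv_comp_add_mul (g : ℝ → ℝ) (a b s : ℝ) :
    deriv (fun s => g (a + b * s)) s = b * deriv g (a + b * s) := by
  rw [deriv_comp_mul_left b (fun x => g (a + x)), deriv_comp_const_add, smul_eq_mul]

namespace GaussianIntegrable

lemma exists_choiceProb_update_eq_locScaleAverage (hh : GaussianIntegrable h id volume)
    (β₀ β₁ z₁ : Fin d → ℝ) (hz₂ : ∀ i, z₂ i ≠ 0) (i : Fin d) :
    ∃ w : (Fin d → ℝ) → ℝ, GaussianIntegrable w (fun v => v i) volume ∧ ∀ s ζ,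
      choiceProb h β₀ β₁ (update z₁ i s) (update z₂ i ζ) =
        locScaleAverage volume w (fun v => v i) stdNormalPDF (β₀ i + β₁ i * s) ζ := by
  refine ⟨_, hh.mul_prod_compl i fun j _ =>
    gaussianDecay_stdNormalPDF.locScale (β₀ j + β₁ j * z₁ j) (hz₂ j), fun s ζ => ?_⟩
  rw [choiceProb_eq_integral_indexDensity]
  refine integral_congr_ae (ae_of_all _ fun v => ?_)
  have hcompl : ∀ j ∈ ({i}ᶜ : Finset (Fin d)), j ≠ i := fun j hj => by simpa using hj
  have hprod : ∏ j ∈ {i}ᶜ, locScale stdNormalPDF (β₀ j + β₁ j * update z₁ i s j)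
      (update z₂ i ζ j) (v j) =
      ∏ j ∈ {i}ᶜ, locScale stdNormalPDF (β₀ j + β₁ j * z₁ j) (z₂ j) (v j) :=
    Finset.prod_congr rfl fun j hj => by
      simp only [update_of_ne (hcompl j hj)]
  simp only [indexDensity, Fintype.prod_eq_mul_prod_compl i, Pi.add_apply, Pi.mul_apply, hprod,
    update_self]
  ring

lemma differentiable_choiceProb_update (hh : GaussianIntegrable h id volume)
    (hz₂ : ∀ i, z₂ i ≠ 0) (i : Fin d) :
    Differentiable ℝ fun s => choiceProb h β₀ β₁ (update z₁ i s) z₂ := by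
  obtain ⟨w, hw, hw_eq⟩ := hh.exists_choiceProb_update_eq_locScaleAverage β₀ β₁ z₁ hz₂ i
  have hm := fun s => hw_eq s (z₂ i)
  simp only [update_eq_self] at hm
  have hg := hw.differentiable_locScaleAverage_stdNormalPDF
    (measurable_pi_apply i).aemeasurable (hz₂ i)
  simp only [hm]
  fun_prop

lemma differentiable_deriv_choiceProb_update (hh : GaussianIntegrable h id volume)
    (hz₂ : ∀ i, z₂ i ≠ 0) (i : Fin d) :
    Differentiable ℝ (deriv fun s => choiceProb h β₀ β₁ (update z₁ i s) z₂) := by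
  obtain ⟨w, hw, hw_eq⟩ := hh.exists_choiceProb_update_eq_locScaleAverage β₀ β₁ z₁ hz₂ i
  have hm := fun s => hw_eq s (z₂ i)
  simp only [update_eq_self] at hm
  have hg := hw.differentiable_deriv_locScaleAverage_stdNormalPDF
    (measurable_pi_apply i).aemeasurable (hz₂ i)
  simp only [hm, funext (deriv_comp_add_mul
    (fun c => locScaleAverage volume w (fun v => v i) stdNormalPDF c (z₂ i)) (β₀ i) (β₁ i))]
  fun_prop

lemma hasDerivAt_choiceProb_update_scale (hh : GaussianIntegrable h id volume)
    (hz₂ : ∀ i, z₂ i ≠ 0) (i : Fin d) (hβ₁ : β₁ i ≠ 0) (s : ℝ) :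
    HasDerivAt (fun ζ => choiceProb h β₀ β₁ (update z₁ i s) (update z₂ i ζ))
      ((z₂ i)⁻¹ * (((β₁ i) ^ 2)⁻¹ *
        deriv (deriv fun s => choiceProb h β₀ β₁ (update z₁ i s) z₂) s +
        (β₀ i / β₁ i + s) * deriv (fun s => choiceProb h β₀ β₁ (update z₁ i s) z₂) s)) (z₂ i) := by
  obtain ⟨w, hw, hw_eq⟩ := hh.exists_choiceProb_update_eq_locScaleAverage β₀ β₁ z₁ hz₂ i
  have hm := fun s => hw_eq s (z₂ i)
  simp only [update_eq_self] at hm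
  simp only [hw_eq, hm]
  refine (hw.hasDerivAt_locScaleAverage_stdNormalPDF_scale (measurable_pi_apply i).aemeasurable _
    (hz₂ i)).congr_deriv ?_
  set g : ℝ → ℝ := fun c => locScaleAverage volume w (fun v => v i) stdNormalPDF c (z₂ i)
  have hg' : (deriv fun s => g (β₀ i + β₁ i * s)) = fun s => β₁ i * deriv g (β₀ i + β₁ i * s) :=
    funext (deriv_comp_add_mul g (β₀ i) (β₁ i))
  have hg'' : deriv (fun s => β₁ i * deriv g (β₀ i + β₁ i * s)) s =
      β₁ i ^ 2 * deriv (deriv g) (β₀ i + β₁ i * s) := by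
    rw [deriv_const_mul_field, deriv_comp_add_mul]
    ring
  rw [hg', hg'']
  field_simp

end GaussianIntegrable

lemma eq_and_eq_of_inv_sq_eq_of_div_eq {b₀ b₁ c₀ c₁ : ℝ} (hsign : 0 < b₁ * c₁)
    (hsq : (b₁ ^ 2)⁻¹ = (c₁ ^ 2)⁻¹) (hdiv : b₀ / b₁ = c₀ / c₁) : b₀ = c₀ ∧ b₁ = c₁ := by
  have hb₁ : b₁ ≠ 0 := left_ne_zero_of_mul hsign.ne'
  have hslope : b₁ = c₁ := by
    refine (sq_eq_sq_iff_eq_or_eq_neg.mp (inv_injective hsq)).resolve_right fun hneg => ?_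
    nlinarith [sq_nonneg c₁]
  exact ⟨by rwa [← hslope, div_left_inj' hb₁] at hdiv, hslope⟩

-- Both models satisfy the heat equation for the same function. Eliminating the `ζ`-derivative
-- leaves a linear second-order equation in `s` with constant coefficients.
lemma choiceProb_update_ode (hh : GaussianIntegrable h id volume)
    (hh' : GaussianIntegrable h' id volume) (hz₂ : ∀ i, z₂ i ≠ 0) {i : Fin d} (hβ₁ : β₁ i ≠ 0)
    (hγ₁ : γ₁ i ≠ 0) {s : ℝ}
    (heq : ∀ᶠ p in 𝓝 (update z₁ i s, z₂),
      choiceProb h β₀ β₁ p.1 p.2 = choiceProb h' γ₀ γ₁ p.1 p.2) :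
    (β₀ i / β₁ i - γ₀ i / γ₁ i) * deriv (fun s => choiceProb h β₀ β₁ (update z₁ i s) z₂) s +
      ((β₁ i ^ 2)⁻¹ - (γ₁ i ^ 2)⁻¹) *
        deriv (deriv fun s => choiceProb h β₀ β₁ (update z₁ i s) z₂) s = 0 := by
  have hlocation : (fun s => choiceProb h β₀ β₁ (update z₁ i s) z₂) =ᶠ[𝓝 s]
      fun s => choiceProb h' γ₀ γ₁ (update z₁ i s) z₂ :=
    (Continuous.tendsto (f := fun t => (update z₁ i t, z₂)) (by fun_prop) s).eventually heq
  have hscale : (fun ζ => choiceProb h β₀ β₁ (update z₁ i s) (update z₂ i ζ)) =ᶠ[𝓝 (z₂ i)]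
      fun ζ => choiceProb h' γ₀ γ₁ (update z₁ i s) (update z₂ i ζ) :=
    (Continuous.tendsto' (f := fun ζ => (update z₁ i s, update z₂ i ζ)) (by fun_prop) _ _
      (by rw [update_eq_self])).eventually heq
  have hheat := ((hh'.hasDerivAt_choiceProb_update_scale hz₂ i hγ₁ s).congr_of_eventuallyEq
    hscale).unique (hh.hasDerivAt_choiceProb_update_scale hz₂ i hβ₁ s)
  replace hheat := mul_left_cancel₀ (inv_ne_zero (hz₂ i)) hheat
  rw [← hlocation.deriv.deriv_eq, ← hlocation.deriv_eq] at hheat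
  linear_combination -hheat

lemma coeffs_eq_of_choiceProb_eventuallyEq (hh : GaussianIntegrable h id volume)
    (hh' : GaussianIntegrable h' id volume) (hz₂ : ∀ i, z₂ i ≠ 0) {i : Fin d}
    (hsign : 0 < β₁ i * γ₁ i) {S : Set ℝ} (hS : IsOpen S) (hS' : IsPreconnected S)
    (heq : ∀ s ∈ S, ∀ᶠ p in 𝓝 (update z₁ i s, z₂),
      choiceProb h β₀ β₁ p.1 p.2 = choiceProb h' γ₀ γ₁ p.1 p.2)
    (hns : ¬ IsAffineOrExpAffineOn (fun s => choiceProb h β₀ β₁ (update z₁ i s) z₂) S) :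
    β₀ i = γ₀ i ∧ β₁ i = γ₁ i := by
  obtain ⟨hdiv, hsq⟩ := coeffs_eq_zero_of_not_isAffineOrExpAffineOn hS hS'
    (hh.differentiable_choiceProb_update hz₂ i).differentiableOn
    (hh.differentiable_deriv_choiceProb_update hz₂ i).differentiableOn
    (fun s hs => choiceProb_update_ode hh hh' hz₂ (left_ne_zero_of_mul hsign.ne')
      (right_ne_zero_of_mul hsign.ne') (heq s hs)) hns
  exact eq_and_eq_of_inv_sq_eq_of_div_eq hsign (sub_eq_zero.mp hsq) (sub_eq_zero.mp hdiv)

lemma ae_eq_of_choiceProb_eventuallyEq (hh : GaussianIntegrable h id volume)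
    (hh' : GaussianIntegrable h' id volume) (hβ₁ : ∀ i, β₁ i ≠ 0) (hz₂ : ∀ i, z₂ i ≠ 0)
    (heq : ∀ᶠ z in 𝓝 z₁, choiceProb h β₀ β₁ z z₂ = choiceProb h' β₀ β₁ z z₂) :
    h =ᵐ[volume] h' := by
  have hindex : Tendsto (fun c => (c - β₀) / β₁) (𝓝 (β₀ + β₁ * z₁)) (𝓝 z₁) := by
    refine Continuous.tendsto' ?_ _ _ ?_
    · simp only [div_eq_mul_inv]
      fun_prop
    · ext i
      simp [hβ₁ i]
  rw [← sub_ae_eq_zero]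
  refine (hh.sub hh').ae_eq_zero_of_integral_mul_indexDensity_eq_zero
    (c₀ := β₀ + β₁ * z₁) hz₂ ?_
  filter_upwards [hindex.eventually heq] with c hc
  have hinv : β₀ + β₁ * ((c - β₀) / β₁) = c := by
    ext i
    simp [mul_div_cancel₀ _ (hβ₁ i)]
  have hint : ∀ {f}, GaussianIntegrable f id volume →
      Integrable fun v => f v * indexDensity c z₂ v := fun hf =>
    hf.integrable_mul_comp aemeasurable_id (gaussianDecay_indexDensity c hz₂)
  simp only [choiceProb_eq_integral_indexDensity, hinv] at hc
  simp only [Pi.sub_apply, sub_mul]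
  rw [integral_sub (hint hh) (hint hh'), hc, sub_self]

end ChoiceProb

section Bounded

variable {ι : Type*} [Fintype ι]

lemma sum_norm_sq_le_card_mul_norm_sq {E : ι → Type*} [∀ i, SeminormedAddGroup (E i)]
    (v : ∀ i, E i) :
    ∑ i, ‖v i‖ ^ 2 ≤ Fintype.card ι * ‖v‖ ^ 2 := by
  rw [← nsmul_eq_mul]
  exact Finset.sum_le_card_nsmul _ _ _ fun i _ => by gcongr; exact norm_le_pi_norm v i

lemma integrable_exp_neg_mul_norm_sq {a : ℝ} (ha : 0 < a) :
    Integrable fun v : ι → ℝ => Real.exp (-a * ‖v‖ ^ 2) := by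
  let b := a / (Fintype.card ι + 1)
  have hb : 0 < b := by positivity
  have hexponent : ∀ v : ι → ℝ, b * ∑ i, ‖v i‖ ^ 2 ≤ a * ‖v‖ ^ 2 := fun v => by
    calc b * ∑ i, ‖v i‖ ^ 2 ≤ b * ((Fintype.card ι + 1) * ‖v‖ ^ 2) := by
          gcongr
          linarith [sum_norm_sq_le_card_mul_norm_sq v, sq_nonneg ‖v‖]
      _ = a * ‖v‖ ^ 2 := by
          rw [← mul_assoc, div_mul_cancel₀]
          positivity
  refine (Integrable.fintype_prod fun _ : ι => integrable_exp_neg_mul_sq hb).mono'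
    (by fun_prop) (ae_of_all _ fun v => ?_)
  rw [Real.norm_of_nonneg (Real.exp_pos _).le, ← Real.exp_sum, ← Finset.mul_sum, neg_mul, neg_mul]
  exact Real.exp_le_exp.mpr
    (neg_le_neg (by simpa only [Real.norm_eq_abs, sq_abs] using hexponent v))

lemma gaussianIntegrable_of_forall_abs_le {f : (ι → ℝ) → ℝ} (hf : AEStronglyMeasurable f) {C : ℝ}
    (hC : ∀ v, |f v| ≤ C) : GaussianIntegrable f id volume := fun _ ha =>
  (integrable_exp_neg_mul_norm_sq ha).bdd_mul hf (ae_of_all _ hC)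

end Bounded

theorem multivariate_identification_general {d : ℕ} {h h' : (Fin d → ℝ) → ℝ}
    (hh : GaussianIntegrable h id volume) (hh' : GaussianIntegrable h' id volume)
    {β₀ β₁ γ₀ γ₁ : Fin d → ℝ} (hsign : ∀ i, 0 < β₁ i * γ₁ i)
    {U : Set ((Fin d → ℝ) × (Fin d → ℝ))} (hU : IsOpen U) (hUne : U.Nonempty)
    (hU0 : ∀ p ∈ U, ∀ i, p.2 i ≠ 0)
    (heq : ∀ p ∈ U, choiceProb h β₀ β₁ p.1 p.2 = choiceProb h' γ₀ γ₁ p.1 p.2)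
    (hns : ∀ i, ∃ (z₁ z₂ : Fin d → ℝ) (S : Set ℝ), IsOpen S ∧ IsPreconnected S ∧
      (∀ s ∈ S, (update z₁ i s, z₂) ∈ U) ∧
      ¬ IsAffineOrExpAffineOn (fun s => choiceProb h β₀ β₁ (update z₁ i s) z₂) S) :
    (∀ i, β₀ i = γ₀ i ∧ β₁ i = γ₁ i) ∧ h =ᵐ[volume] h' := by
  have heq' : ∀ p ∈ U, ∀ᶠ q in 𝓝 p, choiceProb h β₀ β₁ q.1 q.2 = choiceProb h' γ₀ γ₁ q.1 q.2 :=
    fun p hp => eventually_of_mem (hU.mem_nhds hp) heq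
  have hcoeffs : ∀ i, β₀ i = γ₀ i ∧ β₁ i = γ₁ i := fun i => by
    obtain ⟨z₁, z₂, S, hS, hS', hSU, hns⟩ := hns i
    obtain ⟨s₀, hs₀⟩ := nonempty_of_not_isAffineOrExpAffineOn hns
    exact coeffs_eq_of_choiceProb_eventuallyEq hh hh' (hU0 _ (hSU s₀ hs₀)) (hsign i) hS hS'
      (fun s hs => heq' _ (hSU s hs)) hns
  obtain rfl : β₀ = γ₀ := funext fun i => (hcoeffs i).1
  obtain rfl : β₁ = γ₁ := funext fun i => (hcoeffs i).2
  obtain ⟨p, hp⟩ := hUne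
  have hnear : ∀ᶠ z in 𝓝 p.1, choiceProb h β₀ β₁ z p.2 = choiceProb h' β₀ β₁ z p.2 :=
    (Continuous.tendsto (f := fun z => (z, p.2)) (by fun_prop) p.1).eventually (heq' p hp)
  exact ⟨hcoeffs, ae_eq_of_choiceProb_eventuallyEq hh hh'
    (fun i => left_ne_zero_of_mul (hsign i).ne') (hU0 p hp) hnear⟩

/-- Proposition 2 in structural form: with a `d`-dimensional
Gaussian index, positive (normalized) slopes, equality of generated choice
probabilities on a nonempty open set, and the non-affine/non-exponential
condition in each coordinate, both the coefficients and the structural function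
`h` are identified. -/
theorem multivariate_identification
    {d : ℕ} (hd : 1 ≤ d)
    (h h' : (Fin d → ℝ) → ℝ) (hm : Measurable h) (hm' : Measurable h')
    (hb : ∀ v, h v ∈ Set.Icc (0 : ℝ) 1) (hb' : ∀ v, h' v ∈ Set.Icc (0 : ℝ) 1)
    (β₀ β₁ γ₀ γ₁ : Fin d → ℝ)
    (hβ₁ : ∀ i, 0 < β₁ i) (hγ₁ : ∀ i, 0 < γ₁ i)
    (U : Set ((Fin d → ℝ) × (Fin d → ℝ))) (hUopen : IsOpen U) (hUne : U.Nonempty)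
    (hU0 : ∀ p ∈ U, ∀ i, p.2 i ≠ 0)
    (heq : ∀ p ∈ U, choiceProb h β₀ β₁ p.1 p.2 = choiceProb h' γ₀ γ₁ p.1 p.2)
    (hnl : ∀ i : Fin d, ∃ p ∈ U, ∃ a b : ℝ, a < b ∧
      (∀ s ∈ Set.Ioo a b, (Function.update p.1 i s, p.2) ∈ U) ∧
      ¬ (∃ K₄ K₃ : ℝ, ∀ s ∈ Set.Ioo a b,
          choiceProb h β₀ β₁ (Function.update p.1 i s) p.2 = K₄ * s + K₃) ∧
      ¬ (∃ K₁ K₂ K₃ : ℝ, ∀ s ∈ Set.Ioo a b,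
          choiceProb h β₀ β₁ (Function.update p.1 i s) p.2 =
            K₁ * Real.exp (K₂ * s) + K₃)) :
    (∀ i, β₀ i = γ₀ i ∧ β₁ i = γ₁ i) ∧ h =ᵐ[volume] h' := by
  have hbounded : ∀ g : (Fin d → ℝ) → ℝ, Measurable g → (∀ v, g v ∈ Set.Icc (0 : ℝ) 1) →
      GaussianIntegrable g id volume := fun g hg hg01 =>
    gaussianIntegrable_of_forall_abs_le hg.aestronglyMeasurable fun v =>
      abs_le.mpr ⟨by linarith [(hg01 v).1], (hg01 v).2⟩
  refine multivariate_identification_general (hbounded h hm hb) (hbounded h' hm' hb')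
    (fun i => mul_pos (hβ₁ i) (hγ₁ i)) hUopen hUne hU0 heq fun i => ?_
  obtain ⟨p, -, a, b, -, hpU, haffine, hexp⟩ := hnl i
  exact ⟨p.1, p.2, Set.Ioo a b, isOpen_Ioo, isPreconnected_Ioo, hpU, not_or.mpr ⟨haffine, hexp⟩⟩
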